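/- Let s ∈ (0,1), let N ≥ 2 be an integer, and let Ω ⊂ ℝ^N be a bounded open set of class C^{1,1} with 0 ∈ Ω, symmetric with respect to two distinct coordinate hyperplanes H_j = {x_j = 0} and H_i = {x_i = 0} (i ≠ j), i.e. T_j(Ω) = Ω and T_i(Ω) = Ω where T_k(x) = x − 2 x_k e_k. Suppose H : Ω × ℝ^N → ℝ is such that for every x ∈ Ω the function z ↦ H(x,z) is continuous and bounded on ℝ^N, equals b_{N,s}|x−z|^{2s−N} for all z ∈ ℝ^N∖Ω, and is pointwise s-harmonic in Ω: for every z ∈ Ω the integral (c_{N,s}/2) ∫_{ℝ^N} (2H(x,z) − H(x,z+h) − H(x,z−h))/|h|^{N+2s} dh converges absolutely and equals 0. Define R_s(x) := H(x,x) and assume R_s is twice continuously differentiable in a neighborhood of 0. Then the mixed second partial derivative satisfies ∂_i ∂_j R_s(0) = 0. -/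

import Mathlib

open MeasureTheory Real Filter Metric

noncomputable section

/-- Euclidean space `ℝ^N`. -/
abbrev Euc (N : ℕ) := EuclideanSpace ℝ (Fin N)

/-- The normalizing constant `c_{N,s}` of the fractional Laplacian. -/
def cNs (N : ℕ) (s : ℝ) : ℝ :=
  Real.pi ^ ((N : ℝ) / 2) * s * (4 : ℝ) ^ s * Real.Gamma (((N : ℝ) + 2 * s) / 2) /
    Real.Gamma (1 - s)

/-- The constant `b_{N,s}` of the fundamental solution. -/
def bNs (N : ℕ) (s : ℝ) : ℝ :=
  Real.pi ^ (-(N : ℝ) / 2) * (4 : ℝ) ^ (-s) * Real.Gamma (((N : ℝ) - 2 * s) / 2) /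
    Real.Gamma s

/-- The fractional Laplacian `(-Δ)^s u (x)`, via the absolutely convergent
symmetrized integral `-(c_{N,s}/2) ∫ (u(x+h)+u(x-h)-2u(x))/|h|^{N+2s} dh`. -/
def fracLap (N : ℕ) (s : ℝ) (u : Euc N → ℝ) (x : Euc N) : ℝ :=
  -(cNs N s / 2) * ∫ h : Euc N, (u (x + h) + u (x - h) - 2 * u x) / ‖h‖ ^ ((N : ℝ) + 2 * s)

/-- `φ ∈ C_c^∞(Ω)`. -/
def IsTestFn (N : ℕ) (Ω : Set (Euc N)) (φ : Euc N → ℝ) : Prop :=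
  ContDiff ℝ (⊤ : ℕ∞) φ ∧ HasCompactSupport φ ∧ tsupport φ ⊆ Ω

/-- The signed distance `δ̄(z) = dist(z, Ωᶜ) - dist(z, Ω)`. -/
def signedDistEuc (N : ℕ) (Ω : Set (Euc N)) (z : Euc N) : ℝ :=
  Metric.infDist z Ωᶜ - Metric.infDist z Ω

/-- A bounded open set of class `C^{1,1}`: the signed distance is differentiable with
Lipschitz gradient on a neighborhood of `∂Ω`. -/
def IsC11 (N : ℕ) (Ω : Set (Euc N)) : Prop :=
  IsOpen Ω ∧ Bornology.IsBounded Ω ∧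
    ∃ U : Set (Euc N), IsOpen U ∧ frontier Ω ⊆ U ∧
      (∀ z ∈ U, DifferentiableAt ℝ (signedDistEuc N Ω) z) ∧
      ∃ K : NNReal, LipschitzOnWith K (fun z => gradient (signedDistEuc N Ω) z) U

/-- `δ(z) = dist(z, ∂Ω)`. -/
def bdist (N : ℕ) (Ω : Set (Euc N)) (z : Euc N) : ℝ := Metric.infDist z (frontier Ω)

/-- The outward unit normal `ν = -∇δ̄` (meaningful on `∂Ω`). -/
def outNormal (N : ℕ) (Ω : Set (Euc N)) (θ : Euc N) : Euc N :=
  -gradient (signedDistEuc N Ω) θ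

/-- The surface measure on `∂Ω`: the `(N-1)`-dimensional Hausdorff measure
restricted to `∂Ω`. -/
def surf (N : ℕ) (Ω : Set (Euc N)) : Measure (Euc N) :=
  (μH[(N : ℝ) - 1]).restrict (frontier Ω)

/-- `g` is the fractional normal trace `γ_0^s(w)` on `∂Ω`. -/
def HasFracTrace (N : ℕ) (s : ℝ) (Ω : Set (Euc N)) (w g : Euc N → ℝ) : Prop :=
  ContinuousOn g (frontier Ω) ∧
    ∀ θ ∈ frontier Ω,
      Filter.Tendsto (fun z => w z / bdist N Ω z ^ s) (nhdsWithin θ Ω) (nhds (g θ))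

/-- `G` is a Green function of `(-Δ)^s` in `Ω` with pole at `x`, with constant `C`
in the Green function estimate. -/
def IsGreenFn (N : ℕ) (s : ℝ) (Ω : Set (Euc N)) (C : ℝ) (x : Euc N) (G : Euc N → ℝ) : Prop :=
  Integrable G ∧ (∀ z, z ∉ Ω → G z = 0) ∧
    (∀ φ, IsTestFn N Ω φ → ∫ z in Ω, G z * fracLap N s φ z = φ x) ∧
    ∀ z, z ≠ x → 0 ≤ G z ∧
      G z ≤ C * min (‖x - z‖ ^ (2 * s - (N : ℝ)))
        (bdist N Ω x ^ s * bdist N Ω z ^ s * ‖x - z‖ ^ (-(N : ℝ)))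

/-- The quadratic form `E_s(u,v)` associated with `(-Δ)^s`. -/
def Es (N : ℕ) (s : ℝ) (u v : Euc N → ℝ) : ℝ :=
  (cNs N s / 2) *
    ∫ p : Euc N × Euc N, (u p.1 - u p.2) * (v p.1 - v p.2) / ‖p.1 - p.2‖ ^ ((N : ℝ) + 2 * s)

/-- `u` is a weak solution of `(-Δ)^s u = f(·,u)` in `Ω`, `u = 0` outside `Ω`. -/
def IsWeakSolution (N : ℕ) (s : ℝ) (Ω : Set (Euc N)) (f : Euc N → ℝ → ℝ) (u : Euc N → ℝ) :
    Prop :=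
  (∃ C : NNReal, HolderWith C s.toNNReal u) ∧ (∀ z, z ∉ Ω → u z = 0) ∧
    ∀ φ, IsTestFn N Ω φ → Es N s u φ = ∫ z in Ω, f z (u z) * φ z

/-- Locally `β`-Hölder continuous function. -/
def LocHolder {X : Type*} [PseudoEMetricSpace X] (β : ℝ) (f : X → ℝ) : Prop :=
  ∀ p : X, ∃ t ∈ nhds p, ∃ C : NNReal, HolderOnWith C β.toNNReal f t

/-- The reflection `T_k(x) = x - 2 x_k e_k` across the hyperplane `{x_k = 0}`. -/
def reflectHyp (N : ℕ) (k : Fin N) (x : Euc N) : Euc N :=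
  x - (2 * x k) • EuclideanSpace.single k 1

/-- Maximum principle for pointwise s-harmonic functions. -/
lemma max_principle_aux (N : ℕ) (j : Fin N) (p : ℝ) (Ω : Set (Euc N))
    (hb : Bornology.IsBounded Ω) (u : Euc N → ℝ) (hu : Continuous u)
    (hout : ∀ z, z ∉ Ω → u z = 0)
    (hint : ∀ z ∈ Ω, Integrable (fun h : Euc N =>
        (2 * u z - u (z + h) - u (z - h)) / ‖h‖ ^ p))
    (hzero : ∀ z ∈ Ω, (∫ h : Euc N,
        (2 * u z - u (z + h) - u (z - h)) / ‖h‖ ^ p) = 0) (y : Euc N) : u y ≤ 0 := by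
  by_contra hy
  push Not at hy
  obtain ⟨r, hr⟩ := hb.subset_closedBall (0 : Euc N)
  have hyΩ : y ∈ Ω := by
    by_contra h
    rw [hout y h] at hy
    exact lt_irrefl _ hy
  have hr0 : 0 ≤ r := by
    have := hr hyΩ
    rw [mem_closedBall_zero_iff] at this
    exact (norm_nonneg _).trans this
  obtain ⟨z, hz, hmax⟩ := (isCompact_closedBall (0 : Euc N) r).exists_isMaxOn ⟨y, hr hyΩ⟩
    hu.continuousOn
  have hzpos : 0 < u z := lt_of_lt_of_le hy (hmax (hr hyΩ))
  have hzΩ : z ∈ Ω := by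
    by_contra h
    rw [hout z h] at hzpos
    exact lt_irrefl _ hzpos
  have hle : ∀ w, u w ≤ u z := by
    intro w
    by_cases hw : w ∈ Ω
    · exact hmax (hr hw)
    · rw [hout w hw]; exact hzpos.le
  have hnn : 0 ≤ fun h : Euc N => (2 * u z - u (z + h) - u (z - h)) / ‖h‖ ^ p := by
    intro h
    have h1 := hle (z + h)
    have h2 := hle (z - h)
    exact div_nonneg (by linarith) (Real.rpow_nonneg (norm_nonneg _) _)
  have hae := (integral_eq_zero_iff_of_nonneg hnn (hint z hzΩ)).1 (hzero z hzΩ)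
  rw [mem_closedBall_zero_iff] at hz
  have hopen : IsOpen {h : Euc N | 2 * r < ‖h‖} := isOpen_lt continuous_const continuous_norm
  have hne : {h : Euc N | 2 * r < ‖h‖}.Nonempty := by
    refine ⟨EuclideanSpace.single j (2 * r + 1), ?_⟩
    have : |2 * r + 1| = 2 * r + 1 := abs_of_nonneg (by linarith)
    simp [this]
  have hpos := hopen.measure_pos volume hne
  have hnull : volume {h : Euc N | 2 * r < ‖h‖} = 0 := by
    refine measure_mono_null ?_ (ae_iff.1 hae)
    intro h hh
    have hh : 2 * r < ‖h‖ := hh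
    have hh0 : 0 < ‖h‖ := by linarith
    have e1 : u (z + h) = 0 := by
      apply hout
      intro hm
      have := hr hm
      rw [mem_closedBall_zero_iff] at this
      have h3 := norm_sub_le (z + h) z
      rw [add_sub_cancel_left] at h3
      linarith
    have e2 : u (z - h) = 0 := by
      apply hout
      intro hm
      have := hr hm
      rw [mem_closedBall_zero_iff] at this
      have h3 := norm_sub_le z (z - h)
      rw [sub_sub_cancel] at h3
      linarith
    have : 0 < (2 * u z - u (z + h) - u (z - h)) / ‖h‖ ^ p := by
      rw [e1, e2]
      exact div_pos (by linarith) (Real.rpow_pos_of_pos hh0 _)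
    exact this.ne'
  exact hpos.ne' hnull

/-- The reflection as a linear isometry. -/
lemma exists_refl (N : ℕ) (k : Fin N) :
    ∃ T : Euc N ≃ₗᵢ[ℝ] Euc N, (∀ x, T x = reflectHyp N k x) ∧ ∀ x, T (T x) = x := by
  refine ⟨(Submodule.span ℝ {(EuclideanSpace.single k 1 : Euc N)})ᗮ.reflection, ?_, ?_⟩
  · intro x
    rw [Submodule.reflection_orthogonal_apply, Submodule.reflection_singleton_apply]
    simp [reflectHyp, EuclideanSpace.inner_single_left, mul_smul, two_smul]
  · intro x
    exact Submodule.reflection_reflection _ x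

/-- vanishing of the mixed second derivative of the fractional Robin
function at the center of a doubly symmetric domain. -/
theorem statement6
    (s : ℝ) (hs0 : 0 < s) (hs1 : s < 1)
    (N : ℕ) (hN : 2 ≤ N)
    (Ω : Set (Euc N)) (hΩ : IsC11 N Ω) (h0 : (0 : Euc N) ∈ Ω)
    (j i : Fin N) (hij : i ≠ j)
    (hsymj : reflectHyp N j '' Ω = Ω) (hsymi : reflectHyp N i '' Ω = Ω)
    (H : Euc N → Euc N → ℝ)
    (hHcont : ∀ x ∈ Ω, Continuous (H x))
    (hHbdd : ∀ x ∈ Ω, ∃ M : ℝ, ∀ z, |H x z| ≤ M)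
    (hHout : ∀ x ∈ Ω, ∀ z, z ∉ Ω → H x z = bNs N s * ‖x - z‖ ^ (2 * s - (N : ℝ)))
    (hHharm : ∀ x ∈ Ω, ∀ z ∈ Ω,
      Integrable (fun h : Euc N =>
        (2 * H x z - H x (z + h) - H x (z - h)) / ‖h‖ ^ ((N : ℝ) + 2 * s)) ∧
      (cNs N s / 2) *
        (∫ h : Euc N,
          (2 * H x z - H x (z + h) - H x (z - h)) / ‖h‖ ^ ((N : ℝ) + 2 * s)) = 0)
    (hRC2 : ∃ V ∈ nhds (0 : Euc N), ContDiffOn ℝ 2 (fun x => H x x) V) :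
    fderiv ℝ (fun y => fderiv ℝ (fun x => H x x) y (EuclideanSpace.single j 1)) 0
      (EuclideanSpace.single i 1) = 0 := by
  obtain ⟨T, hT, hTT⟩ := exists_refl N j
  have hTΩ : ∀ x, x ∈ Ω → T x ∈ Ω := by
    intro x hx
    rw [hT, ← hsymj]
    exact ⟨x, hx, rfl⟩
  have hTΩ' : ∀ x, T x ∈ Ω → x ∈ Ω := by
    intro x hx
    have := hTΩ _ hx
    rwa [hTT] at this
  have hc : cNs N s / 2 ≠ 0 := by
    have h1 : 0 < Real.Gamma (1 - s) := Real.Gamma_pos_of_pos (by linarith)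
    have h2 : 0 < Real.Gamma (((N : ℝ) + 2 * s) / 2) := Real.Gamma_pos_of_pos (by positivity)
    have : 0 < cNs N s := by unfold cNs; positivity
    positivity
  have hI : ∀ x ∈ Ω, ∀ z ∈ Ω, (∫ h : Euc N,
      (2 * H x z - H x (z + h) - H x (z - h)) / ‖h‖ ^ ((N : ℝ) + 2 * s)) = 0 := by
    intro x hx z hz
    exact (mul_eq_zero.1 (hHharm x hx z hz).2).resolve_left hc
  -- the reflected equation
  have hmp : MeasurePreserving T volume volume := T.measurePreserving
  have hfun : ∀ x z, (fun h : Euc N => (2 * H (T x) (T z) - H (T x) (T (z + h))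
        - H (T x) (T (z - h))) / ‖h‖ ^ ((N : ℝ) + 2 * s)) =
      (fun h : Euc N => (2 * H (T x) (T z) - H (T x) (T z + h)
        - H (T x) (T z - h)) / ‖h‖ ^ ((N : ℝ) + 2 * s)) ∘ T := by
    intro x z
    funext h
    simp [map_add, map_sub]
  have hTint : ∀ x ∈ Ω, ∀ z ∈ Ω, Integrable (fun h : Euc N => (2 * H (T x) (T z)
        - H (T x) (T (z + h)) - H (T x) (T (z - h))) / ‖h‖ ^ ((N : ℝ) + 2 * s)) := by
    intro x hx z hz
    rw [hfun]
    exact hmp.integrable_comp_of_integrable (hHharm _ (hTΩ x hx) _ (hTΩ z hz)).1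
  have hTI : ∀ x ∈ Ω, ∀ z ∈ Ω, (∫ h : Euc N, (2 * H (T x) (T z)
        - H (T x) (T (z + h)) - H (T x) (T (z - h))) / ‖h‖ ^ ((N : ℝ) + 2 * s)) = 0 := by
    intro x hx z hz
    rw [hfun]
    have := hmp.integral_comp T.toHomeomorph.measurableEmbedding
      (fun h : Euc N => (2 * H (T x) (T z) - H (T x) (T z + h)
        - H (T x) (T z - h)) / ‖h‖ ^ ((N : ℝ) + 2 * s))
    exact this.trans (hI _ (hTΩ x hx) _ (hTΩ z hz))
  have hTout : ∀ x ∈ Ω, ∀ z, z ∉ Ω → H (T x) (T z) = H x z := by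
    intro x hx z hz
    rw [hHout x hx z hz, hHout _ (hTΩ x hx) _ (fun h => hz (hTΩ' z h)), ← map_sub,
      T.norm_map]
  have hsym : ∀ x ∈ Ω, ∀ z, H (T x) (T z) = H x z := by
    intro x hx z
    have c1 : Continuous fun z => H (T x) (T z) := (hHcont _ (hTΩ x hx)).comp T.continuous
    have c2 := hHcont x hx
    apply le_antisymm
    · have := max_principle_aux N j ((N : ℝ) + 2 * s) Ω hΩ.2.1
        (fun z => H (T x) (T z) - H x z) (c1.sub c2)
        (fun z hz => sub_eq_zero.2 (hTout x hx z hz))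
        (fun z hz => ((hTint x hx z hz).sub (hHharm x hx z hz).1).congr
          (Eventually.of_forall fun h => by simp only [Pi.sub_apply]; ring))
        (fun z hz => by
          have := integral_sub (hTint x hx z hz) (hHharm x hx z hz).1
          rw [hTI x hx z hz, hI x hx z hz, sub_zero] at this
          rw [← this]
          congr 1
          funext h
          ring) z
      linarith
    · have := max_principle_aux N j ((N : ℝ) + 2 * s) Ω hΩ.2.1
        (fun z => H x z - H (T x) (T z)) (c2.sub c1)
        (fun z hz => sub_eq_zero.2 (hTout x hx z hz).symm)
        (fun z hz => ((hHharm x hx z hz).1.sub (hTint x hx z hz)).congr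
          (Eventually.of_forall fun h => by simp only [Pi.sub_apply]; ring))
        (fun z hz => by
          have := integral_sub (hHharm x hx z hz).1 (hTint x hx z hz)
          rw [hTI x hx z hz, hI x hx z hz, sub_zero] at this
          rw [← this]
          congr 1
          funext h
          ring) z
      linarith
  -- the normal derivative vanishes on the hyperplane
  have hg : ∀ y ∈ Ω, T y = y →
      fderiv ℝ (fun x => H x x) y (EuclideanSpace.single j 1) = 0 := by
    intro y hy hTy
    by_cases hd : DifferentiableAt ℝ (fun x => H x x) y
    · have hev : (fun x => H x x) =ᶠ[nhds y] (fun x => H x x) ∘ T := by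
        filter_upwards [hΩ.1.mem_nhds hy] with x hx
        exact (hsym x hx x).symm
      have hd' : HasFDerivAt (fun x => H x x) (fderiv ℝ (fun x => H x x) y) (T y) := by
        rw [hTy]; exact hd.hasFDerivAt
      have h2 := hd'.comp y (T.toContinuousLinearEquiv.hasFDerivAt (x := y))
      have h3 : fderiv ℝ (fun x => H x x) y = _ := (h2.congr_of_eventuallyEq hev).fderiv
      have h4 := congrArg (fun L => L (EuclideanSpace.single j 1)) h3
      have h5 : T (EuclideanSpace.single j 1) = -EuclideanSpace.single j 1 := by
        rw [hT]
        simp only [reflectHyp, EuclideanSpace.single_apply, if_true]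
        module
      simp only [ContinuousLinearMap.comp_apply, ContinuousLinearEquiv.coe_coe,
        LinearIsometryEquiv.coe_toContinuousLinearEquiv, h5, map_neg] at h4
      linarith
    · rw [fderiv_zero_of_not_differentiableAt hd]; rfl
  by_cases hd : DifferentiableAt ℝ
      (fun y => fderiv ℝ (fun x => H x x) y (EuclideanSpace.single j 1)) (0 : Euc N)
  · have hline : HasDerivAt (fun t : ℝ => t • (EuclideanSpace.single i 1 : Euc N))
        (EuclideanSpace.single i 1) 0 := by
      simpa using (hasDerivAt_id (0 : ℝ)).smul_const (EuclideanSpace.single i 1 : Euc N)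
    have hd' := hd.hasFDerivAt
    have hd2 : HasFDerivAt
        (fun y => fderiv ℝ (fun x => H x x) y (EuclideanSpace.single j 1))
        (fderiv ℝ (fun y => fderiv ℝ (fun x => H x x) y (EuclideanSpace.single j 1)) 0)
        ((fun t : ℝ => t • (EuclideanSpace.single i 1 : Euc N)) 0) := by
      simpa only [zero_smul] using hd'
    have h1 := hd2.comp_hasDerivAt (0 : ℝ) hline
    have hcont : Tendsto (fun t : ℝ => t • (EuclideanSpace.single i 1 : Euc N)) (nhds 0)
        (nhds 0) := by
      simpa only [zero_smul] using hline.continuousAt.tendsto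
    have h2 : HasDerivAt ((fun y => fderiv ℝ (fun x => H x x) y (EuclideanSpace.single j 1)) ∘
        fun t : ℝ => t • (EuclideanSpace.single i 1 : Euc N)) 0 0 := by
      refine (hasDerivAt_const (0 : ℝ) (0 : ℝ)).congr_of_eventuallyEq ?_
      filter_upwards [hcont (hΩ.1.mem_nhds h0)] with t ht
      refine hg _ ht ?_
      rw [hT]
      simp [reflectHyp, hij.symm]
    exact h1.unique h2
  · rw [fderiv_zero_of_not_differentiableAt hd]; rfl
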